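/- Let ε̄ ∈ int(E) and let (X*, y*, S*) be a maximally complementary solution at ε̄. Then the Jacobian J(X*, y*, S*) is nonsingular if and only if (X*, y*, S*) is strictly complementary, X* is primal nondegenerate, and (y*, S*) is dual nondegenerate. -/

import Mathlib

open Matrix Set

noncomputable section

variable {n m : ℕ}

/-- Feasibility for the primal SDO problem `(P_ε)` (the feasible set does not depend on `ε`). -/
def PrimalFeasible (A : Fin m → Matrix (Fin n) (Fin n) ℝ) (b : Fin m → ℝ)
    (X : Matrix (Fin n) (Fin n) ℝ) : Prop :=
  X.IsSymm ∧ (∀ i, ((A i) * X).trace = b i) ∧ X.PosSemidef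

/-- Feasibility for the dual SDO problem `(D_ε)`. -/
def DualFeasible (C Cbar : Matrix (Fin n) (Fin n) ℝ)
    (A : Fin m → Matrix (Fin n) (Fin n) ℝ) (ε : ℝ)
    (y : Fin m → ℝ) (S : Matrix (Fin n) (Fin n) ℝ) : Prop :=
  S.IsSymm ∧ (∑ i, y i • A i) + S = C + ε • Cbar ∧ S.PosSemidef

/-- The optimal value function `v(ε)` of `(P_ε)`, with values in `EReal`. -/
def vfun (C Cbar : Matrix (Fin n) (Fin n) ℝ) (A : Fin m → Matrix (Fin n) (Fin n) ℝ)
    (b : Fin m → ℝ) (ε : ℝ) : EReal :=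
  sInf ((fun X => (((C + ε • Cbar) * X).trace : EReal)) '' {X | PrimalFeasible A b X})

/-- `E = {ε : v(ε) > -∞}`. -/
def Eset (C Cbar : Matrix (Fin n) (Fin n) ℝ) (A : Fin m → Matrix (Fin n) (Fin n) ℝ)
    (b : Fin m → ℝ) : Set ℝ :=
  {ε | ⊥ < vfun C Cbar A b ε}

/-- The primal optimal set `P*(ε)`. -/
def PrimalOpt (C Cbar : Matrix (Fin n) (Fin n) ℝ) (A : Fin m → Matrix (Fin n) (Fin n) ℝ)
    (b : Fin m → ℝ) (ε : ℝ) : Set (Matrix (Fin n) (Fin n) ℝ) :=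
  {X | PrimalFeasible A b X ∧ ∀ X', PrimalFeasible A b X' →
    ((C + ε • Cbar) * X).trace ≤ ((C + ε • Cbar) * X').trace}

/-- The dual optimal set `D*(ε)`. -/
def DualOpt (C Cbar : Matrix (Fin n) (Fin n) ℝ) (A : Fin m → Matrix (Fin n) (Fin n) ℝ)
    (b : Fin m → ℝ) (ε : ℝ) : Set ((Fin m → ℝ) × Matrix (Fin n) (Fin n) ℝ) :=
  {p | DualFeasible C Cbar A ε p.1 p.2 ∧ ∀ y' S', DualFeasible C Cbar A ε y' S' →
    ∑ i, b i * y' i ≤ ∑ i, b i * p.1 i}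

/-- A maximally complementary optimal solution: `X` lies in the relative interior of `P*(ε)`
and `(y, S)` in the relative interior of `D*(ε)`. -/
def MaxComp (C Cbar : Matrix (Fin n) (Fin n) ℝ) (A : Fin m → Matrix (Fin n) (Fin n) ℝ)
    (b : Fin m → ℝ) (ε : ℝ) (X : Matrix (Fin n) (Fin n) ℝ) (y : Fin m → ℝ)
    (S : Matrix (Fin n) (Fin n) ℝ) : Prop :=
  X ∈ intrinsicInterior ℝ (PrimalOpt C Cbar A b ε) ∧
    (y, S) ∈ intrinsicInterior ℝ (DualOpt C Cbar A b ε)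

/-- `π(ε) = π(ε')`: the optimal partitions at `ε` and `ε'` coincide, expressed through
maximally complementary solutions (`B = range X*`, `N = range S*`, `T` being determined
by `B` and `N`). -/
def SamePartition (C Cbar : Matrix (Fin n) (Fin n) ℝ) (A : Fin m → Matrix (Fin n) (Fin n) ℝ)
    (b : Fin m → ℝ) (ε ε' : ℝ) : Prop :=
  ∃ X y S X' y' S', MaxComp C Cbar A b ε X y S ∧ MaxComp C Cbar A b ε' X' y' S' ∧
    LinearMap.range X.mulVecLin = LinearMap.range X'.mulVecLin ∧
    LinearMap.range S.mulVecLin = LinearMap.range S'.mulVecLin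

/-- The standing assumptions: symmetric data, linearly independent constraint matrices and
the interior point condition at `ε = 0`. -/
def StandingAssumptions (C Cbar : Matrix (Fin n) (Fin n) ℝ)
    (A : Fin m → Matrix (Fin n) (Fin n) ℝ) (b : Fin m → ℝ) : Prop :=
  C.IsSymm ∧ Cbar.IsSymm ∧ (∀ i, (A i).IsSymm) ∧ LinearIndependent ℝ A ∧
    ∃ X y S, PrimalFeasible A b X ∧ X.PosDef ∧ DualFeasible C Cbar A 0 y S ∧ S.PosDef

/-- The invariancy set of `ε̄`. -/
def InvSet (C Cbar : Matrix (Fin n) (Fin n) ℝ) (A : Fin m → Matrix (Fin n) (Fin n) ℝ)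
    (b : Fin m → ℝ) (εbar : ℝ) : Set ℝ :=
  {ε | ε ∈ interior (Eset C Cbar A b) ∧ SamePartition C Cbar A b ε εbar}

/-- `dim B(ε) = dim B(ε')` and `dim N(ε) = dim N(ε')`, expressed through maximally
complementary solutions. -/
def DimsMatch (C Cbar : Matrix (Fin n) (Fin n) ℝ) (A : Fin m → Matrix (Fin n) (Fin n) ℝ)
    (b : Fin m → ℝ) (ε ε' : ℝ) : Prop :=
  ∀ X y S X' y' S', MaxComp C Cbar A b ε X y S → MaxComp C Cbar A b ε' X' y' S' →
    Module.finrank ℝ (LinearMap.range X.mulVecLin) =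
        Module.finrank ℝ (LinearMap.range X'.mulVecLin) ∧
      Module.finrank ℝ (LinearMap.range S.mulVecLin) =
        Module.finrank ℝ (LinearMap.range S'.mulVecLin)

/-- A transition point: a singleton invariancy set such that every neighborhood contains a
parameter at which `dim B` or `dim N` differs. -/
def IsTransitionPoint (C Cbar : Matrix (Fin n) (Fin n) ℝ) (A : Fin m → Matrix (Fin n) (Fin n) ℝ)
    (b : Fin m → ℝ) (εbar : ℝ) : Prop :=
  εbar ∈ interior (Eset C Cbar A b) ∧
    (∀ ε ∈ interior (Eset C Cbar A b), ε ≠ εbar → ¬ SamePartition C Cbar A b ε εbar) ∧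
    ∀ ξ : ℝ, 0 < ξ → ∃ ε ∈ Set.Ioo (εbar - ξ) (εbar + ξ) ∩ interior (Eset C Cbar A b),
      ¬ DimsMatch C Cbar A b ε εbar

/-- Existence of a strictly complementary optimal solution at `ε`. -/
def HasStrictComp (C Cbar : Matrix (Fin n) (Fin n) ℝ) (A : Fin m → Matrix (Fin n) (Fin n) ℝ)
    (b : Fin m → ℝ) (ε : ℝ) : Prop :=
  ∃ X y S, X ∈ PrimalOpt C Cbar A b ε ∧ (y, S) ∈ DualOpt C Cbar A b ε ∧ (X + S).PosDef

/-- Nonsingularity of the Jacobian `J(X, y, S)` of the optimality system, as a linear map on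
`S^n × ℝ^m × S^n`: only the trivial symmetric triple is mapped to zero. -/
def JNonsingular (A : Fin m → Matrix (Fin n) (Fin n) ℝ)
    (X S : Matrix (Fin n) (Fin n) ℝ) : Prop :=
  ∀ (DX DS : Matrix (Fin n) (Fin n) ℝ) (Dy : Fin m → ℝ), DX.IsSymm → DS.IsSymm →
    (∀ i, ((A i) * DX).trace = 0) → ((∑ i, Dy i • A i) + DS = 0) →
    (DX * S + S * DX + X * DS + DS * X = 0) → DX = 0 ∧ Dy = 0 ∧ DS = 0

/-- Primal nondegeneracy of a primal feasible `X`. -/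
def PrimalNondeg (A : Fin m → Matrix (Fin n) (Fin n) ℝ)
    (X : Matrix (Fin n) (Fin n) ℝ) : Prop :=
  ∃ (r : ℕ) (M₁ : Matrix (Fin n) (Fin r) ℝ) (M₂ : Matrix (Fin n) (Fin (n - r)) ℝ),
    M₁ᵀ * M₁ = 1 ∧ M₂ᵀ * M₂ = 1 ∧ M₁ᵀ * M₂ = 0 ∧
    LinearMap.range M₁.mulVecLin = LinearMap.range X.mulVecLin ∧
    LinearIndependent ℝ (fun i =>
      Matrix.fromBlocks (M₁ᵀ * (A i) * M₁) (M₁ᵀ * (A i) * M₂) (M₂ᵀ * (A i) * M₁) 0)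

/-- Dual nondegeneracy of a dual feasible `(y, S)` (the condition involves only `S`). -/
def DualNondeg (A : Fin m → Matrix (Fin n) (Fin n) ℝ)
    (S : Matrix (Fin n) (Fin n) ℝ) : Prop :=
  ∃ (k : ℕ) (N₁ : Matrix (Fin n) (Fin k) ℝ),
    N₁ᵀ * N₁ = 1 ∧ LinearMap.range N₁.mulVecLin = LinearMap.ker S.mulVecLin ∧
    ∀ W : Matrix (Fin k) (Fin k) ℝ, W.IsSymm →
      W ∈ Submodule.span ℝ (Set.range fun i => N₁ᵀ * (A i) * N₁)

/-- A central solution with parameter `μ` for the problems `(P_ε)` and `(D_ε)`. -/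
def CentralSol (C Cbar : Matrix (Fin n) (Fin n) ℝ) (A : Fin m → Matrix (Fin n) (Fin n) ℝ)
    (b : Fin m → ℝ) (ε μ : ℝ) (X : Matrix (Fin n) (Fin n) ℝ) (y : Fin m → ℝ)
    (S : Matrix (Fin n) (Fin n) ℝ) : Prop :=
  PrimalFeasible A b X ∧ DualFeasible C Cbar A ε y S ∧
    X * S = μ • (1 : Matrix (Fin n) (Fin n) ℝ)

/-- The Frobenius norm of a matrix. -/
def frobNorm {α β : Type*} [Fintype α] [Fintype β] (M : Matrix α β ℝ) : ℝ :=
  Real.sqrt (∑ i, ∑ j, (M i j) ^ 2)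

/-- The spectral norm (induced 2-norm) of a square matrix. -/
def specNorm {N : ℕ} (M : Matrix (Fin N) (Fin N) ℝ) : ℝ :=
  ‖LinearMap.toContinuousLinearMap (Matrix.toEuclideanLin M)‖

/-- The smallest eigenvalue of a symmetric matrix, via the Rayleigh quotient. -/
def lamMin {k : ℕ} (M : Matrix (Fin k) (Fin k) ℝ) : ℝ :=
  sInf {r : ℝ | ∃ x : Fin k → ℝ, (∑ i, (x i) ^ 2) = 1 ∧ r = x ⬝ᵥ M.mulVec x}

/-- `θ^μ`: the operator norm of the inverse of the Jacobian `J(X, y, S)` on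
`S^n × ℝ^m × S^n`, characterized as the least constant `t ≥ 0` with
`‖(ΔX, Δy, ΔS)‖ ≤ t * ‖J(X,y,S)(ΔX, Δy, ΔS)‖` for all symmetric `ΔX`, `ΔS`. -/
def thetaMu (A : Fin m → Matrix (Fin n) (Fin n) ℝ)
    (X S : Matrix (Fin n) (Fin n) ℝ) : ℝ :=
  sInf {t : ℝ | 0 ≤ t ∧ ∀ (DX DS : Matrix (Fin n) (Fin n) ℝ) (Dy : Fin m → ℝ),
    DX.IsSymm → DS.IsSymm →
    Real.sqrt (frobNorm DX ^ 2 + (∑ i, (Dy i) ^ 2) + frobNorm DS ^ 2) ≤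
      t * Real.sqrt ((∑ i, (((A i) * DX).trace) ^ 2) +
        frobNorm ((∑ i, Dy i • A i) + DS) ^ 2 +
        frobNorm ((1 / 2 : ℝ) • (DX * S + S * DX + X * DS + DS * X)) ^ 2)}

/-- A nonlinearity interval: a non-singleton open subinterval of `int(E)`, of maximal length,
on which `dim B(·)` and `dim N(·)` are constant while the optimal partition `π(·)` varies. -/
def IsNonlinearityInterval (C Cbar : Matrix (Fin n) (Fin n) ℝ)
    (A : Fin m → Matrix (Fin n) (Fin n) ℝ) (b : Fin m → ℝ) (I : Set ℝ) : Prop :=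
  I ⊆ interior (Eset C Cbar A b) ∧ IsOpen I ∧ I.OrdConnected ∧
    (∃ a ∈ I, ∃ c ∈ I, a ≠ c) ∧
    (∀ ε ∈ I, ∀ ε' ∈ I, DimsMatch C Cbar A b ε ε') ∧
    ¬ (∀ ε ∈ I, ∀ ε' ∈ I, SamePartition C Cbar A b ε ε') ∧
    ∀ I' : Set ℝ, I ⊆ I' → I' ⊆ interior (Eset C Cbar A b) → IsOpen I' → I'.OrdConnected →
      (∀ ε ∈ I', ∀ ε' ∈ I', DimsMatch C Cbar A b ε ε') → I' = I

end

/-!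
Strong duality holds because the primal Slater point makes the positive semidefinite cone absorb
every direction, so that the M. Riesz extension theorem yields a Lagrange multiplier. Hence `XS = 0`
for every optimal pair.

For positive semidefinite `X`, `S` with `XS = 0`, a triple `(ΔX, Δy, ΔS)` in the kernel of the
Jacobian has `⟨ΔX, ΔS⟩ = 0`. The matrix `W = ΔX S + X ΔS` is skew and satisfies the Lyapunov
equations `XW + WX = 0` and `SW + WS = 0`; if `X + S` is positive definite these force `W = 0`.
Inserting `(X + S)(X + S)⁻¹` between `ΔX` and `ΔS` then writes `0 = ⟨ΔX, ΔS⟩` as minus a sum of two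
nonnegative traces, whose vanishing means `X ΔS = 0` and `S ΔX = 0`. What remains is precisely what
the two nondegeneracy conditions exclude: a nonzero `y` with `(∑ yᵢ Aⁱ) X = 0`, respectively a
nonzero `D` with `⟨Aⁱ, D⟩ = 0` and `S D = 0`. Conversely a nonsingular Jacobian is surjective, and
its image contains no `(0, 0, u uᵀ)` with `0 ≠ u ∈ ker X ∩ ker S`.
-/

section ConicDuality

variable {E ι : Type*} [AddCommGroup E] [Module ℝ E]

theorem map_nonneg_of_isMinOn_of_mem_sup_span_neg {K : PointedCone ℝ E} {a : ι → E →ₗ[ℝ] ℝ}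
    {c : E →ₗ[ℝ] ℝ} {x d : E} (hx : x ∈ K) (hopt : IsMinOn c {z ∈ K | ∀ i, a i z = a i x} x)
    (hd : d ∈ K ⊔ Submodule.span {r : ℝ // 0 ≤ r} {-x}) (had : ∀ i, a i d = 0) : 0 ≤ c d := by
  obtain ⟨w, hw, v, hv, hwv⟩ := Submodule.mem_sup.1 hd
  obtain ⟨⟨r, hr⟩, rfl⟩ := Submodule.mem_span_singleton.1 hv
  have hr1 : 0 < r + 1 := by positivity
  have hw_eq : w + x = d + (r + 1) • x := by
    rw [← hwv, Nonneg.mk_smul]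
    module
  have hmem : (r + 1)⁻¹ • (w + x) ∈ K := K.smul_mem (by positivity) (K.add_mem hw hx)
  have hle : c x ≤ c ((r + 1)⁻¹ • (w + x)) :=
    hopt ⟨hmem, fun i => by simp [hw_eq, had i, hr1.ne']⟩
  rw [hw_eq, map_smul, map_add, map_smul, smul_eq_mul, smul_eq_mul, mul_add,
    inv_mul_cancel_left₀ hr1.ne', le_add_iff_nonneg_left] at hle
  exact nonneg_of_mul_nonneg_right hle (inv_pos.2 hr1)

theorem exists_lagrangeMultiplier [Fintype ι] {K : PointedCone ℝ E} {a : ι → E →ₗ[ℝ] ℝ}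
    {c : E →ₗ[ℝ] ℝ} {x x₀ : E} (hx : x ∈ K) (hopt : IsMinOn c {z ∈ K | ∀ i, a i z = a i x} x)
    (hfeas : ∀ i, a i x₀ = a i x) (hx₀ : ∀ z, ∃ t : ℝ, 0 ≤ t ∧ t • x₀ + z ∈ K) :
    ∃ y : ι → ℝ, (∀ z ∈ K, ∑ i, y i * a i z ≤ c z) ∧ c x = ∑ i, y i * a i x := by
  let F : PointedCone ℝ E := K ⊔ Submodule.span {r : ℝ // 0 ≤ r} {-x}
  let L : Submodule ℝ E := ⨅ i, LinearMap.ker (a i)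
  have mem_L {d : E} : d ∈ L ↔ ∀ i, a i d = 0 := by simp [L]
  have dense (z : E) : ∃ d : L, (d : E) + z ∈ F := by
    obtain ⟨t, ht, hz⟩ := hx₀ z
    exact ⟨⟨t • (x₀ - x), mem_L.2 fun i => by simp [hfeas i]⟩, Submodule.mem_sup.2
      ⟨_, hz, t • -x, Submodule.mem_span_singleton.2 ⟨⟨t, ht⟩, rfl⟩, by module⟩⟩
  obtain ⟨g, hgL, hgF⟩ := riesz_extension F ⟨L, c ∘ₗ L.subtype⟩
    (fun d hd => map_nonneg_of_isMinOn_of_mem_sup_span_neg (c := c) hx hopt hd (mem_L.1 d.2))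
    dense
  have hcg : c - g ∈ Submodule.span ℝ (range a) := mem_span_of_iInf_ker_le_ker fun d hd => by
    simpa [sub_eq_zero] using (hgL ⟨d, hd⟩).symm
  obtain ⟨y, hy⟩ := (Submodule.mem_span_range_iff_exists_fun ℝ).1 hcg
  have hsum (z : E) : ∑ i, y i * a i z = c z - g z := by
    simpa using LinearMap.congr_fun hy z
  have hgK : ∀ z ∈ K, 0 ≤ g z := fun z hz => hgF z (Submodule.mem_sup_left hz)
  have hgx : g x = 0 := by
    have := hgF (-x) (Submodule.mem_sup_right (Submodule.mem_span_singleton_self _))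
    rw [map_neg] at this
    linarith [hgK x hx]
  exact ⟨y, fun z hz => by linarith [hsum z, hgK z hz], by rw [hsum, hgx, sub_zero]⟩

end ConicDuality

section PosSemidef

open scoped ComplexOrder

variable {n 𝕜 : Type*} [RCLike 𝕜]

open scoped MatrixOrder in
theorem exists_smul_add_posSemidef [Finite n] {P Y : Matrix n n 𝕜} (hP : P.PosDef)
    (hY : Y.IsHermitian) : ∃ t : ℝ, 0 ≤ t ∧ (t • P + Y).PosSemidef := by
  classical
  have := Fintype.ofFinite n
  rcases isEmpty_or_nonempty n with h | h
  · refine ⟨0, le_rfl, ?_⟩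
    rw [Subsingleton.elim (_ + Y) 0]
    exact .zero
  obtain ⟨r, hr, hrP⟩ := (CFC.exists_pos_algebraMap_le_iff hP.isHermitian).2
    fun x hx => hP.isStrictlyPositive.spectrum_pos hx
  obtain ⟨s, hs⟩ := (Matrix.finite_real_spectrum (A := Y)).bddBelow
  have hsY := algebraMap_le_of_le_spectrum (fun x hx => hs hx) hY
  refine ⟨|s| / r, by positivity, nonneg_iff_posSemidef.1 ?_⟩
  have hcoeff : 0 ≤ |s| / r * r + s := by
    rw [div_mul_cancel₀ _ hr.ne']
    linarith [neg_abs_le s]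
  calc 0 ≤ algebraMap ℝ (Matrix n n 𝕜) (|s| / r * r + s) := algebraMap_nonneg _ hcoeff
    _ = (|s| / r) • algebraMap ℝ (Matrix n n 𝕜) r + algebraMap ℝ (Matrix n n 𝕜) s := by
      rw [map_add, map_mul, Algebra.smul_def]
    _ ≤ (|s| / r) • P + Y := add_le_add (smul_le_smul_of_nonneg_left hrP (by positivity)) hsY

variable [Fintype n]

theorem posSemidef_of_trace_mul_nonneg {M : Matrix n n 𝕜} (hM : M.IsHermitian)
    (h : ∀ Z : Matrix n n 𝕜, Z.PosSemidef → 0 ≤ (M * Z).trace) : M.PosSemidef := by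
  refine .of_dotProduct_mulVec_nonneg hM fun x => ?_
  simpa only [mul_vecMulVec, trace_vecMulVec, dotProduct_comm] using
    h _ (posSemidef_vecMulVec_self_star x)

open scoped MatrixOrder in
theorem exists_eq_conjTranspose_mul_self {X : Matrix n n 𝕜} (hX : X.PosSemidef) :
    ∃ B : Matrix n n 𝕜, X = Bᴴ * B := by
  classical exact CStarAlgebra.nonneg_iff_eq_star_mul_self.1 hX.nonneg

theorem trace_mul_mul_mul_conjTranspose_nonneg {X Y : Matrix n n 𝕜}
    (hX : X.PosSemidef) (hY : Y.PosSemidef) (D : Matrix n n 𝕜) :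
    0 ≤ (X * D * Y * Dᴴ).trace := by
  obtain ⟨B, rfl⟩ := exists_eq_conjTranspose_mul_self hX
  have h := (hY.mul_mul_conjTranspose_same (B * D)).trace_nonneg
  rwa [conjTranspose_mul, ← mul_assoc, trace_mul_comm, ← mul_assoc, ← mul_assoc, ← mul_assoc] at h

theorem mul_mul_eq_zero_of_posSemidef_of_trace_eq_zero {X Y : Matrix n n 𝕜}
    (hX : X.PosSemidef) (hY : Y.PosSemidef) {D : Matrix n n 𝕜}
    (h : (X * D * Y * Dᴴ).trace = 0) : X * D * Y = 0 := by
  obtain ⟨B, rfl⟩ := exists_eq_conjTranspose_mul_self hX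
  obtain ⟨F, rfl⟩ := exists_eq_conjTranspose_mul_self hY
  have hBDF : (B * D * Fᴴ) * (B * D * Fᴴ)ᴴ = B * (D * (Fᴴ * F) * Dᴴ * Bᴴ) := by
    simp only [conjTranspose_mul, conjTranspose_conjTranspose, mul_assoc]
  have hzero : B * D * Fᴴ = 0 := by
    rw [← trace_mul_conjTranspose_self_eq_zero_iff, hBDF, trace_mul_comm, ← h, trace_mul_comm]
    simp only [mul_assoc, trace_mul_comm Bᴴ]
  calc Bᴴ * B * D * (Fᴴ * F) = Bᴴ * (B * D * Fᴴ) * F := by simp only [mul_assoc]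
    _ = 0 := by rw [hzero, mul_zero, zero_mul]

theorem posDef_add_of_forall_eq_zero {X Y : Matrix n n 𝕜} (hX : X.PosSemidef)
    (hY : Y.PosSemidef) (h : ∀ v, X *ᵥ v = 0 → Y *ᵥ v = 0 → v = 0) : (X + Y).PosDef := by
  refine .of_dotProduct_mulVec_pos (hX.1.add hY.1) fun v hv => ?_
  have hXv := hX.dotProduct_mulVec_nonneg v
  have hYv := hY.dotProduct_mulVec_nonneg v
  rw [add_mulVec, dotProduct_add]
  refine (add_nonneg hXv hYv).lt_of_ne' fun hsum => hv ?_
  obtain ⟨hX0, hY0⟩ := (add_eq_zero_iff_of_nonneg hXv hYv).1 hsum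
  exact h v ((hX.dotProduct_mulVec_zero_iff v).1 hX0) ((hY.dotProduct_mulVec_zero_iff v).1 hY0)

theorem mul_eq_zero_of_posSemidef_of_mul_add_mul_eq_zero {X M : Matrix n n 𝕜} (hX : X.PosSemidef)
    (h : X * M + M * X = 0) : X * M = 0 := by
  classical
  have hXM := trace_mul_mul_mul_conjTranspose_nonneg hX .one M
  have hMX := trace_mul_mul_mul_conjTranspose_nonneg .one hX M
  have hsum : (X * M * 1 * Mᴴ).trace + (1 * M * X * Mᴴ).trace = 0 := by
    rw [← trace_add, mul_one, one_mul, ← add_mul, h, zero_mul, trace_zero]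
  simpa only [mul_one] using mul_mul_eq_zero_of_posSemidef_of_trace_eq_zero hX .one
    ((add_eq_zero_iff_of_nonneg hXM hMX).1 hsum).1

variable {X S U V : Matrix n n 𝕜}

theorem mul_add_mul_eq_zero_of_posDef_add (hX : X.PosSemidef) (hS : S.PosSemidef)
    (hXS : X * S = 0) (hPD : (X + S).PosDef) (hU : U.IsHermitian) (hV : V.IsHermitian)
    (h : U * S + S * U + X * V + V * X = 0) : U * S + X * V = 0 := by
  classical
  set W := U * S + X * V with hW
  have hSX : S * X = 0 := by simpa [hX.1.eq, hS.1.eq] using congr($hXSᴴ)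
  have hskew : Wᴴ = -W := by
    rw [eq_neg_iff_add_eq_zero, ← h, hW]
    simp only [conjTranspose_add, conjTranspose_mul, hX.1.eq, hS.1.eq, hU.eq, hV.eq]
    abel
  have hWX : W * X = X * V * X := by rw [hW, add_mul, mul_assoc, hSX, mul_zero, zero_add]
  have hSW : S * W = S * U * S := by
    rw [hW, mul_add, ← mul_assoc, ← mul_assoc, hSX, zero_mul, add_zero]
  have hXW : X * W + W * X = 0 := by
    have : (W * X)ᴴ = W * X := by simp [hWX, hX.1.eq, hV.eq, mul_assoc]
    rw [conjTranspose_mul, hX.1.eq, hskew, mul_neg] at this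
    rw [← this, add_neg_cancel]
  have hSW' : S * W + W * S = 0 := by
    have : (S * W)ᴴ = S * W := by simp [hSW, hS.1.eq, hU.eq, mul_assoc]
    rw [conjTranspose_mul, hS.1.eq, hskew, neg_mul] at this
    rw [← this, neg_add_cancel]
  have hprod : W * (X + S) = 0 := by
    rw [mul_add, (add_eq_zero_iff_eq_neg'.1 hXW), (add_eq_zero_iff_eq_neg'.1 hSW'),
      mul_eq_zero_of_posSemidef_of_mul_add_mul_eq_zero hX hXW,
      mul_eq_zero_of_posSemidef_of_mul_add_mul_eq_zero hS hSW', neg_zero, add_zero]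
  exact hPD.isUnit.mul_left_eq_zero.1 hprod

theorem mul_eq_zero_and_mul_eq_zero_of_trace_mul_eq_zero (hX : X.PosSemidef) (hS : S.PosSemidef)
    (hXS : X * S = 0) (hPD : (X + S).PosDef) (hU : U.IsHermitian) (hV : V.IsHermitian)
    (htr : (U * V).trace = 0) (h : U * S + X * V = 0) : X * V = 0 ∧ S * U = 0 := by
  classical
  set R := (X + S)⁻¹ with hR
  have hRpd : R.PosDef := hPD.inv
  have hXR : X * R = R * X := by
    have hSX : S * X = 0 := by simpa [hX.1.eq, hS.1.eq] using congr($hXSᴴ)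
    have hcomm : Commute X (X + S) := by simp [commute_iff_eq, mul_add, add_mul, hXS, hSX]
    let := hPD.isUnit.invertible
    rw [hR, ← invOf_eq_nonsing_inv]
    exact hcomm.invOf_right
  have hone : S * R + X * R = 1 := by
    rw [← add_mul, add_comm, hR, mul_nonsing_inv _ ((isUnit_iff_isUnit_det _).1 hPD.isUnit)]
  have hsum : (S * U * R * Uᴴ).trace + (X * V * R * Vᴴ).trace = 0 := by
    have hUS : U * S * R * V = -(X * V * R * Vᴴ) := by
      rw [eq_neg_of_add_eq_zero_left h, hV.eq, neg_mul, neg_mul]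
    have hXV : U * X * R * V = -(U * R * Uᴴ * S) := by
      rw [mul_assoc U, hXR, ← mul_assoc, mul_assoc _ X, eq_neg_of_add_eq_zero_right h, hU.eq,
        mul_neg, ← mul_assoc]
    have hUV : U * V = U * S * R * V + U * X * R * V := by
      rw [← add_mul, mul_assoc U, mul_assoc U, ← mul_add, hone, mul_one]
    rw [hUV, hUS, hXV, trace_add, trace_neg, trace_neg, trace_mul_comm _ S, ← mul_assoc,
      ← mul_assoc, ← neg_add, neg_eq_zero] at htr
    rw [add_comm, htr]
  obtain ⟨hSU0, hXV0⟩ := (add_eq_zero_iff_of_nonneg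
    (trace_mul_mul_mul_conjTranspose_nonneg hS hRpd.posSemidef U)
    (trace_mul_mul_mul_conjTranspose_nonneg hX hRpd.posSemidef V)).1 hsum
  exact ⟨hRpd.isUnit.mul_left_eq_zero.1
      (mul_mul_eq_zero_of_posSemidef_of_trace_eq_zero hX hRpd.posSemidef hXV0),
    hRpd.isUnit.mul_left_eq_zero.1
      (mul_mul_eq_zero_of_posSemidef_of_trace_eq_zero hS hRpd.posSemidef hSU0)⟩

end PosSemidef

section SymmMatrix

/-- The real vector space `𝕊 n` of symmetric matrices. -/
abbrev SymmMatrix (n : Type*) : Submodule ℝ (Matrix n n ℝ) :=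
  selfAdjoint.submodule ℝ (Matrix n n ℝ)

variable {n ι : Type*}

theorem mem_symmMatrix {M : Matrix n n ℝ} : M ∈ SymmMatrix n ↔ M.IsSymm :=
  isHermitian_iff_isSymm

theorem isSymm_sum_smul [Fintype ι] {A : ι → Matrix n n ℝ} (hA : ∀ i, (A i).IsSymm) (y : ι → ℝ) :
    (∑ i, y i • A i).IsSymm := by
  simp [IsSymm, transpose_sum, (hA _).eq]

variable [Fintype n]

theorem trace_sum_smul_mul [Fintype ι] (A : ι → Matrix n n ℝ) (y : ι → ℝ) (Z : Matrix n n ℝ) :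
    ((∑ i, y i • A i) * Z).trace = ∑ i, y i * (A i * Z).trace := by
  simp [Matrix.sum_mul, trace_sum]

theorem trace_mul_self_eq_zero_iff_of_isSymm {M : Matrix n n ℝ} (hM : M.IsSymm) :
    (M * M).trace = 0 ↔ M = 0 := by
  rw [← trace_conjTranspose_mul_self_eq_zero_iff, conjTranspose_eq_transpose_of_trivial, hM.eq]

/-- The linear functional `X ↦ ⟨F, X⟩ = tr (F X)` on symmetric matrices. -/
def traceMulLeft (F : Matrix n n ℝ) : SymmMatrix n →ₗ[ℝ] ℝ :=
  traceLinearMap n ℝ ℝ ∘ₗ LinearMap.mulLeft ℝ F ∘ₗ (SymmMatrix n).subtype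

@[simp]
theorem traceMulLeft_apply (F : Matrix n n ℝ) (X : SymmMatrix n) :
    traceMulLeft F X = (F * X).trace := rfl

theorem forall_isSymm_mem_span_iff [Finite ι] {B : ι → Matrix n n ℝ} (hB : ∀ i, (B i).IsSymm) :
    (∀ W : Matrix n n ℝ, W.IsSymm → W ∈ Submodule.span ℝ (range B)) ↔
      ∀ W : Matrix n n ℝ, W.IsSymm → (∀ i, (B i * W).trace = 0) → W = 0 := by
  have := Fintype.ofFinite ι
  simp only [Submodule.mem_span_range_iff_exists_fun]
  refine ⟨fun h W hW hBW => ?_, fun h W hW => ?_⟩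
  · obtain ⟨c, hc⟩ := h W hW
    have htr := trace_sum_smul_mul B c W
    simp only [hc, hBW, mul_zero, Finset.sum_const_zero] at htr
    exact (trace_mul_self_eq_zero_iff_of_isSymm hW).1 htr
  · have hker : ⨅ i, LinearMap.ker (traceMulLeft (B i)) ≤ LinearMap.ker (traceMulLeft W) := by
      intro Z hZ
      have : Z = 0 := Subtype.ext <| h Z (mem_symmMatrix.1 Z.2) (by simpa using hZ)
      simp [this]
    obtain ⟨c, hc⟩ := (Submodule.mem_span_range_iff_exists_fun ℝ).1
      (mem_span_of_iInf_ker_le_ker hker)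
    have hdiff : (∑ i, c i • B i - W).IsSymm := (isSymm_sum_smul hB c).sub hW
    refine ⟨c, sub_eq_zero.1 <| (trace_mul_self_eq_zero_iff_of_isSymm hdiff).1 ?_⟩
    rw [Matrix.sub_mul, trace_sub, trace_sum_smul_mul, sub_eq_zero]
    simpa using LinearMap.congr_fun hc ⟨_, mem_symmMatrix.2 hdiff⟩

end SymmMatrix

section StrongDuality

variable {n ι : Type*} [Fintype n] [Fintype ι]

variable (n) in
/-- The cone of positive semidefinite matrices in the space of symmetric matrices. -/
def psdCone : PointedCone ℝ (SymmMatrix n) where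
  carrier := {X | (X : Matrix n n ℝ).PosSemidef}
  add_mem' := PosSemidef.add
  zero_mem' := .zero
  smul_mem' r _ hX := hX.smul r.2

theorem exists_posSemidef_sub_sum_smul {A : ι → Matrix n n ℝ} {F X X₀ : Matrix n n ℝ}
    (hA : ∀ i, (A i).IsSymm) (hF : F.IsSymm) (hX : X.PosSemidef) (hX₀ : X₀.PosDef)
    (hfeas : ∀ i, (A i * X₀).trace = (A i * X).trace)
    (hopt : ∀ Z : Matrix n n ℝ, Z.PosSemidef → (∀ i, (A i * Z).trace = (A i * X).trace) →
      (F * X).trace ≤ (F * Z).trace) :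
    ∃ y : ι → ℝ, (F - ∑ i, y i • A i).PosSemidef ∧ ((F - ∑ i, y i • A i) * X).trace = 0 := by
  obtain ⟨y, hy, hyX⟩ := exists_lagrangeMultiplier (K := psdCone n)
    (a := fun i => traceMulLeft (A i)) (c := traceMulLeft F) (x := ⟨X, hX.1⟩)
    (x₀ := ⟨X₀, hX₀.1⟩) hX (fun Z hZ => hopt Z hZ.1 hZ.2) hfeas
    fun Z => exists_smul_add_posSemidef hX₀ Z.2
  have trace_slack (Z : Matrix n n ℝ) : ((F - ∑ i, y i • A i) * Z).trace =
      (F * Z).trace - ∑ i, y i * (A i * Z).trace := by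
    rw [Matrix.sub_mul, trace_sub, trace_sum_smul_mul]
  refine ⟨y, posSemidef_of_trace_mul_nonneg ?_ fun Z hZ => ?_, ?_⟩
  · exact isHermitian_iff_isSymm.2 (hF.sub (isSymm_sum_smul hA y))
  · rw [trace_slack, sub_nonneg]
    exact hy ⟨Z, hZ.1⟩ hZ
  · rw [trace_slack, sub_eq_zero]
    exact hyX

end StrongDuality

section Complementarity

variable {n m : ℕ} {A : Fin m → Matrix (Fin n) (Fin n) ℝ}
  {C Cbar X X₀ S : Matrix (Fin n) (Fin n) ℝ} {b y : Fin m → ℝ} {ε : ℝ}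

theorem trace_objective_mul_eq (hX : PrimalFeasible A b X) (hS : DualFeasible C Cbar A ε y S) :
    ((C + ε • Cbar) * X).trace = ∑ i, b i * y i + (S * X).trace := by
  simp only [← hS.2.1, Matrix.add_mul, trace_add, trace_sum_smul_mul, hX.2.1, mul_comm]

theorem isSymm_objective (hA : ∀ i, (A i).IsSymm) (hS : DualFeasible C Cbar A ε y S) :
    (C + ε • Cbar).IsSymm := by
  rw [← hS.2.1]
  exact (isSymm_sum_smul hA y).add hS.1

theorem mul_eq_zero_of_mem_primalOpt_of_mem_dualOpt (hA : ∀ i, (A i).IsSymm)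
    (hX₀ : PrimalFeasible A b X₀) (hX₀pd : X₀.PosDef)
    (hX : X ∈ PrimalOpt C Cbar A b ε) (hS : (y, S) ∈ DualOpt C Cbar A b ε) : X * S = 0 := by
  obtain ⟨⟨hXsymm, hXfeas, hXpsd⟩, hXopt⟩ := hX
  obtain ⟨hSfeas, hSopt⟩ := hS
  obtain ⟨y', hS', hSX'⟩ := exists_posSemidef_sub_sum_smul hA (isSymm_objective hA hSfeas) hXpsd
    hX₀pd (fun i => by rw [hX₀.2.1, hXfeas]) fun Z hZ h =>
      hXopt Z ⟨isHermitian_iff_isSymm.1 hZ.1, fun i => by rw [h, hXfeas], hZ⟩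
  have hSfeas' : DualFeasible C Cbar A ε y' (C + ε • Cbar - ∑ i, y' i • A i) :=
    ⟨isHermitian_iff_isSymm.1 hS'.1, add_sub_cancel _ _, hS'⟩
  have hgap := trace_objective_mul_eq ⟨hXsymm, hXfeas, hXpsd⟩ hSfeas
  rw [trace_objective_mul_eq ⟨hXsymm, hXfeas, hXpsd⟩ hSfeas', hSX'] at hgap
  have hle : (X * 1 * S * 1ᴴ).trace ≤ 0 := by
    rw [conjTranspose_one, mul_one, mul_one, trace_mul_comm]
    linarith [hSopt y' _ hSfeas']
  simpa only [mul_one] using mul_mul_eq_zero_of_posSemidef_of_trace_eq_zero hXpsd hSfeas.2.2 <|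
    hle.antisymm (trace_mul_mul_mul_conjTranspose_nonneg hXpsd hSfeas.2.2 1)

end Complementarity

section OrthonormalColumns

variable {l n p R : Type*} [Fintype n] [Fintype p]

theorem mul_eq_zero_iff_range_le_ker [CommSemiring R] {Y : Matrix l n R} {M : Matrix n p R} :
    Y * M = 0 ↔ LinearMap.range M.mulVecLin ≤ LinearMap.ker Y.mulVecLin := by
  classical
  rw [LinearMap.range_le_ker_iff, ← mulVecLin_mul, ← mulVecLin_zero, ← toLin'_apply',
    ← toLin'_apply', toLin'.injective.eq_iff]

theorem mul_transpose_mul_eq_of_range_le {q : Type*} [Fintype q] [DecidableEq p] [CommRing R]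
    {M : Matrix n p R} {D : Matrix n q R} (hM : Mᵀ * M = 1)
    (h : LinearMap.range D.mulVecLin ≤ LinearMap.range M.mulVecLin) : M * Mᵀ * D = D := by
  classical
  have hproj : (1 - M * Mᵀ) * M = 0 := by
    rw [Matrix.sub_mul, Matrix.mul_assoc, hM, Matrix.one_mul, Matrix.mul_one, sub_self]
  have hD : (1 - M * Mᵀ) * D = 0 :=
    mul_eq_zero_iff_range_le_ker.2 (h.trans (mul_eq_zero_iff_range_le_ker.1 hproj))
  rwa [Matrix.sub_mul, Matrix.one_mul, sub_eq_zero, eq_comm] at hD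

theorem exists_orthonormal_columns {k : ℕ} (V : Submodule ℝ (n → ℝ))
    (hV : Module.finrank ℝ V = k) :
    ∃ M : Matrix n (Fin k) ℝ, Mᵀ * M = 1 ∧ LinearMap.range M.mulVecLin = V := by
  subst hV
  let e := WithLp.linearEquiv 2 ℝ (n → ℝ)
  let W : Submodule ℝ (EuclideanSpace ℝ n) := V.comap e.toLinearMap
  have hW : Module.finrank ℝ W = Module.finrank ℝ V := (e.ofSubmodule' V).finrank_eq
  let v := (stdOrthonormalBasis ℝ W).reindex (finCongr hW)
  refine ⟨.of fun i j => (v j : EuclideanSpace ℝ n) i, ?_, ?_⟩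
  · ext i j
    simpa [Matrix.mul_apply, Matrix.one_apply, PiLp.inner_apply, mul_comm] using
      orthonormal_iff_ite.1 v.orthonormal i j
  · have hspan : Submodule.span ℝ (range fun j => (v j : EuclideanSpace ℝ n)) = W := by
      have := congr(($(v.toBasis.span_eq)).map W.subtype)
      rwa [Submodule.map_span, Submodule.map_top, Submodule.range_subtype, ← range_comp,
        v.coe_toBasis] at this
    calc _ = (Submodule.span ℝ (range fun j => (v j : EuclideanSpace ℝ n))).map e.toLinearMap := by
          rw [range_mulVecLin, Submodule.map_span, ← range_comp]
          rfl
      _ = V := by rw [hspan, Submodule.map_comap_eq_of_surjective e.surjective]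

theorem exists_orthonormal_splitting {n : ℕ} (V : Submodule ℝ (Fin n → ℝ)) :
    ∃ (r : ℕ) (M₁ : Matrix (Fin n) (Fin r) ℝ) (M₂ : Matrix (Fin n) (Fin (n - r)) ℝ),
      M₁ᵀ * M₁ = 1 ∧ M₂ᵀ * M₂ = 1 ∧ M₁ᵀ * M₂ = 0 ∧ LinearMap.range M₁.mulVecLin = V ∧
      M₁ * M₁ᵀ + M₂ * M₂ᵀ = 1 := by
  obtain ⟨M₁, hM₁, hV⟩ := exists_orthonormal_columns V rfl
  have hsurj : LinearMap.range M₁ᵀ.mulVecLin = ⊤ :=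
    LinearMap.range_eq_top.2 fun v =>
      ⟨M₁ *ᵥ v, by rw [mulVecLin_apply, mulVec_mulVec, hM₁, one_mulVec]⟩
  have hker : Module.finrank ℝ (LinearMap.ker M₁ᵀ.mulVecLin) = n - Module.finrank ℝ V := by
    have := LinearMap.finrank_range_add_finrank_ker M₁ᵀ.mulVecLin
    rw [hsurj, finrank_top, Module.finrank_fin_fun, Module.finrank_fin_fun] at this
    omega
  obtain ⟨M₂, hM₂, hV₂⟩ := exists_orthonormal_columns _ hker
  have h₁₂ : M₁ᵀ * M₂ = 0 := mul_eq_zero_iff_range_le_ker.2 hV₂.le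
  have h₂₁ : M₂ᵀ * M₁ = 0 := by simpa using congr($h₁₂ᵀ)
  have hone : fromRows M₁ᵀ M₂ᵀ * fromCols M₁ M₂ = 1 := by
    rw [fromRows_mul_fromCols, hM₁, hM₂, h₁₂, h₂₁, fromBlocks_one]
  have hle := Submodule.finrank_le V
  rw [Module.finrank_fin_fun] at hle
  rw [mul_eq_one_comm_of_card_eq _ _ _ (by simp [hle]), fromCols_mul_fromRows] at hone
  exact ⟨_, M₁, M₂, hM₁, hM₂, h₁₂, hV, hone⟩

end OrthonormalColumns

section Compression

variable {n p q ι R : Type*} [Fintype n] [CommSemiring R]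

theorem isSymm_transpose_mul_mul {D : Matrix n n R} (hD : D.IsSymm) (N : Matrix n p R) :
    (Nᵀ * D * N).IsSymm := by
  simp [IsSymm, hD.eq, Matrix.mul_assoc]

theorem trace_transpose_mul_mul_mul [Fintype p] (D : Matrix n n R) (N : Matrix n p R)
    (W : Matrix p p R) : (Nᵀ * D * N * W).trace = (D * (N * W * Nᵀ)).trace := by
  rw [Matrix.mul_assoc, Matrix.mul_assoc, trace_mul_comm]
  simp only [Matrix.mul_assoc]

theorem sum_smul_fromBlocks_compress [Fintype ι] (A : ι → Matrix n n R) (M₁ : Matrix n p R)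
    (M₂ : Matrix n q R) (y : ι → R) :
    ∑ i, y i • fromBlocks (M₁ᵀ * A i * M₁) (M₁ᵀ * A i * M₂) (M₂ᵀ * A i * M₁) 0 =
      fromBlocks (M₁ᵀ * (∑ i, y i • A i) * M₁) (M₁ᵀ * (∑ i, y i • A i) * M₂)
        (M₂ᵀ * (∑ i, y i • A i) * M₁) (0 : Matrix q q R) := by
  simp only [Matrix.mul_sum, Matrix.sum_mul, Matrix.mul_smul, Matrix.smul_mul]
  ext (i | i) (j | j) <;> simp [Matrix.sum_apply]

end Compression

section Nondegeneracy

variable {n m : ℕ} {A : Fin m → Matrix (Fin n) (Fin n) ℝ} {X S : Matrix (Fin n) (Fin n) ℝ}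

theorem primalNondeg_iff (hA : ∀ i, (A i).IsSymm) :
    PrimalNondeg A X ↔ ∀ y : Fin m → ℝ, (∑ i, y i • A i) * X = 0 → y = 0 := by
  constructor
  · rintro ⟨r, M₁, M₂, -, -, -, hrange, hind⟩ y hy
    have hYM : (∑ i, y i • A i) * M₁ = 0 := by
      rwa [mul_eq_zero_iff_range_le_ker, hrange, ← mul_eq_zero_iff_range_le_ker]
    have hMY : M₁ᵀ * (∑ i, y i • A i) = 0 := by
      simpa [(isSymm_sum_smul hA y).eq] using congr($hYMᵀ)
    refine funext (Fintype.linearIndependent_iff.1 hind y ?_)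
    rw [sum_smul_fromBlocks_compress, hMY, Matrix.mul_assoc M₂ᵀ, hYM, Matrix.zero_mul,
      Matrix.zero_mul, Matrix.mul_zero, fromBlocks_zero]
  · intro h
    obtain ⟨r, M₁, M₂, hM₁, hM₂, h₁₂, hrange, hone⟩ :=
      exists_orthonormal_splitting (LinearMap.range X.mulVecLin)
    refine ⟨r, M₁, M₂, hM₁, hM₂, h₁₂, hrange, Fintype.linearIndependent_iff.2 fun y hy => ?_⟩
    rw [sum_smul_fromBlocks_compress, ← fromBlocks_zero, fromBlocks_inj] at hy
    refine congrFun (h y ?_)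
    rw [mul_eq_zero_iff_range_le_ker, ← hrange, ← mul_eq_zero_iff_range_le_ker]
    calc (∑ i, y i • A i) * M₁ = (M₁ * M₁ᵀ + M₂ * M₂ᵀ) * ((∑ i, y i • A i) * M₁) := by
          rw [hone, Matrix.one_mul]
      _ = M₁ * (M₁ᵀ * (∑ i, y i • A i) * M₁) + M₂ * (M₂ᵀ * (∑ i, y i • A i) * M₁) := by
        simp only [Matrix.add_mul, Matrix.mul_assoc]
      _ = 0 := by rw [hy.1, hy.2.2.1, Matrix.mul_zero, Matrix.mul_zero, add_zero]

theorem dualNondeg_iff (hA : ∀ i, (A i).IsSymm) :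
    DualNondeg A S ↔ ∀ D : Matrix (Fin n) (Fin n) ℝ, D.IsSymm →
      (∀ i, (A i * D).trace = 0) → S * D = 0 → D = 0 := by
  constructor
  · rintro ⟨k, N, hN, hrange, hspan⟩ D hD hAD hSD
    have hND : N * Nᵀ * D = D :=
      mul_transpose_mul_eq_of_range_le hN (hrange ▸ mul_eq_zero_iff_range_le_ker.1 hSD)
    have hcompress : N * (Nᵀ * D * N) * Nᵀ = D := by
      have hDN : D * (N * Nᵀ) = D := by simpa [hD.eq] using congr($hNDᵀ)
      calc N * (Nᵀ * D * N) * Nᵀ = N * Nᵀ * D * (N * Nᵀ) := by simp only [Matrix.mul_assoc]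
        _ = D := by rw [hND, hDN]
    have hzero : Nᵀ * D * N = 0 := by
      refine (forall_isSymm_mem_span_iff fun i => isSymm_transpose_mul_mul (hA i) N).1 hspan _
        (isSymm_transpose_mul_mul hD N) fun i => ?_
      rw [trace_transpose_mul_mul_mul, hcompress, hAD]
    rw [← hcompress, hzero, Matrix.mul_zero, Matrix.zero_mul]
  · intro h
    obtain ⟨N, hN, hrange⟩ := exists_orthonormal_columns (LinearMap.ker S.mulVecLin) rfl
    refine ⟨_, N, hN, hrange, (forall_isSymm_mem_span_iff fun i =>
      isSymm_transpose_mul_mul (hA i) N).2 fun W hW hBW => ?_⟩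
    have hSN : S * N = 0 := mul_eq_zero_iff_range_le_ker.2 hrange.le
    have hD : N * W * Nᵀ = 0 := by
      refine h _ (isSymm_transpose_mul_mul hW Nᵀ) (fun i => ?_) ?_
      · rw [← trace_transpose_mul_mul_mul, hBW]
      · rw [← Matrix.mul_assoc, ← Matrix.mul_assoc, hSN, Matrix.zero_mul, Matrix.zero_mul]
    calc W = Nᵀ * N * W * (Nᵀ * N) := by rw [hN, Matrix.one_mul, Matrix.mul_one]
      _ = Nᵀ * (N * W * Nᵀ) * N := by simp only [Matrix.mul_assoc]
      _ = 0 := by rw [hD, Matrix.mul_zero, Matrix.zero_mul]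

end Nondegeneracy

section Jacobian

variable {n ι : Type*} [Fintype n] [Fintype ι]

/-- The Lyapunov operator `D ↦ P D + D P` on symmetric matrices. -/
def lyapunov (P : SymmMatrix n) : SymmMatrix n →ₗ[ℝ] SymmMatrix n :=
  ((LinearMap.mulLeft ℝ (P : Matrix n n ℝ) + LinearMap.mulRight ℝ (P : Matrix n n ℝ)) ∘ₗ
    (SymmMatrix n).subtype).codRestrict _ fun D => by
      simp [mem_symmMatrix, IsSymm, (mem_symmMatrix.1 P.2).eq, (mem_symmMatrix.1 D.2).eq, add_comm]

@[simp]
theorem coe_lyapunov_apply (P D : SymmMatrix n) :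
    (lyapunov P D : Matrix n n ℝ) = P * D + D * P := rfl

/-- The Jacobian `J(X, y, S)` of the optimality system. Its third component is scaled by `2`, to
match `JNonsingular`. -/
def jacobian (A : ι → SymmMatrix n) (X S : SymmMatrix n) :
    (SymmMatrix n × (ι → ℝ) × SymmMatrix n) →ₗ[ℝ] (ι → ℝ) × SymmMatrix n × SymmMatrix n :=
  .prod (.pi (fun i => traceMulLeft (A i : Matrix n n ℝ)) ∘ₗ .fst ℝ _ _) <|
    .prod ((Fintype.linearCombination ℝ A).coprod .id ∘ₗ .snd ℝ _ _)
      ((lyapunov S).coprod (lyapunov X ∘ₗ .snd ℝ _ _))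

theorem jacobian_apply_eq_zero_iff {A : ι → SymmMatrix n} {X S U V : SymmMatrix n}
    {y : ι → ℝ} :
    jacobian A X S (U, y, V) = 0 ↔ (∀ i, (A i * U : Matrix n n ℝ).trace = 0) ∧
      (∑ i, y i • (A i : Matrix n n ℝ)) + V = 0 ∧
      (U * S + S * U + X * V + V * X : Matrix n n ℝ) = 0 := by
  simp [jacobian, Prod.ext_iff, funext_iff, Subtype.ext_iff, Fintype.linearCombination_apply,
    add_comm, add_left_comm, add_assoc]

theorem jNonsingular_iff_ker_jacobian_eq_bot {n m : ℕ} (A : Fin m → SymmMatrix (Fin n))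
    (X S : SymmMatrix (Fin n)) :
    JNonsingular (fun i => (A i : Matrix (Fin n) (Fin n) ℝ)) X S ↔
      LinearMap.ker (jacobian A X S) = ⊥ := by
  rw [LinearMap.ker_eq_bot']
  constructor
  · rintro h ⟨U, y, V⟩ hJ
    obtain ⟨hAU, hyV, hUV⟩ := jacobian_apply_eq_zero_iff.1 hJ
    obtain ⟨hU, hy, hV⟩ := h U V y (mem_symmMatrix.1 U.2) (mem_symmMatrix.1 V.2) hAU hyV hUV
    exact Prod.ext (Subtype.ext hU) (Prod.ext hy (Subtype.ext hV))
  · intro h U V y hU hV hAU hyV hUV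
    have := h (⟨U, mem_symmMatrix.2 hU⟩, y, ⟨V, mem_symmMatrix.2 hV⟩)
      (jacobian_apply_eq_zero_iff.2 ⟨hAU, hyV, hUV⟩)
    simpa [Prod.ext_iff, Subtype.ext_iff] using this

theorem posDef_add_of_ker_jacobian_eq_bot {A : ι → SymmMatrix n} {X S : SymmMatrix n}
    (hX : (X : Matrix n n ℝ).PosSemidef) (hS : (S : Matrix n n ℝ).PosSemidef)
    (hJ : LinearMap.ker (jacobian A X S) = ⊥) : (X + S : Matrix n n ℝ).PosDef := by
  refine posDef_add_of_forall_eq_zero hX hS fun u hXu hSu => ?_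
  have hsurj : Function.Surjective (jacobian A X S) := by
    refine (LinearMap.injective_iff_surjective_of_finrank_eq_finrank ?_).1
      (LinearMap.ker_eq_bot.1 hJ)
    simp only [Module.finrank_prod]
    omega
  have huu : vecMulVec u u ∈ SymmMatrix n := mem_symmMatrix.2 (transpose_vecMulVec u u)
  obtain ⟨⟨U, y, V⟩, h⟩ := hsurj ⟨0, 0, vecMulVec u u, huu⟩
  have h₃ : lyapunov S U + lyapunov X V = ⟨vecMulVec u u, huu⟩ := congr(($h).2.2)
  have huS : u ᵥ* (S : Matrix n n ℝ) = 0 := by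
    rw [← hS.1.eq, conjTranspose_eq_transpose_of_trivial, vecMul_transpose, hSu]
  have huX : u ᵥ* (X : Matrix n n ℝ) = 0 := by
    rw [← hX.1.eq, conjTranspose_eq_transpose_of_trivial, vecMul_transpose, hXu]
  have hquad : (u ⬝ᵥ u) * (u ⬝ᵥ u) = 0 := by
    have := congr(u ⬝ᵥ ($h₃ : Matrix n n ℝ) *ᵥ u)
    simpa [add_mulVec, ← mulVec_mulVec, hXu, hSu, dotProduct_add, dotProduct_mulVec u, huX, huS,
      vecMulVec_mulVec] using this
  exact dotProduct_self_eq_zero.1 (mul_self_eq_zero.1 hquad)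

end Jacobian

section JacobianNonsingular

variable {n m : ℕ} {A : Fin m → Matrix (Fin n) (Fin n) ℝ} {X S : Matrix (Fin n) (Fin n) ℝ}

theorem posDef_add_of_jNonsingular (hA : ∀ i, (A i).IsSymm) (hX : X.PosSemidef)
    (hS : S.PosSemidef) (hJ : JNonsingular A X S) : (X + S).PosDef :=
  posDef_add_of_ker_jacobian_eq_bot (X := ⟨X, hX.1⟩) (S := ⟨S, hS.1⟩) hX hS <|
    (jNonsingular_iff_ker_jacobian_eq_bot (fun i => ⟨A i, mem_symmMatrix.2 (hA i)⟩) _ _).1 hJ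

theorem primalNondeg_of_jNonsingular (hA : ∀ i, (A i).IsSymm) (hX : X.IsSymm)
    (hJ : JNonsingular A X S) : PrimalNondeg A X := by
  refine (primalNondeg_iff hA).2 fun y hy => ?_
  have hsymm := isSymm_sum_smul hA y
  have hy' : X * (∑ i, y i • A i) = 0 := by simpa [hX.eq, hsymm.eq] using congr($hyᵀ)
  exact (hJ 0 (-∑ i, y i • A i) y isSymm_zero hsymm.neg (by simp) (add_neg_cancel _)
    (by rw [mul_neg, neg_mul, hy, hy']; simp)).2.1

theorem dualNondeg_of_jNonsingular (hA : ∀ i, (A i).IsSymm) (hS : S.IsSymm)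
    (hJ : JNonsingular A X S) : DualNondeg A S := by
  refine (dualNondeg_iff hA).2 fun D hD hAD hSD => ?_
  have hDS : D * S = 0 := by simpa [hD.eq, hS.eq] using congr($hSDᵀ)
  exact (hJ D 0 0 hD isSymm_zero hAD (by simp) (by simp [hSD, hDS])).1

theorem jNonsingular_of_nondeg (hA : ∀ i, (A i).IsSymm) (hX : X.PosSemidef) (hS : S.PosSemidef)
    (hXS : X * S = 0) (hPD : (X + S).PosDef) (hP : PrimalNondeg A X) (hD : DualNondeg A S) :
    JNonsingular A X S := by
  intro U V y hU hV hAU hyV hUV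
  have htr : (U * V).trace = 0 := by
    rw [trace_mul_comm, ← neg_eq_of_add_eq_zero_right hyV, neg_mul, trace_neg, trace_sum_smul_mul]
    simp [hAU]
  have hU' : U.IsHermitian := isHermitian_iff_isSymm.2 hU
  have hV' : V.IsHermitian := isHermitian_iff_isSymm.2 hV
  obtain ⟨hXV, hSU⟩ := mul_eq_zero_and_mul_eq_zero_of_trace_mul_eq_zero hX hS hXS hPD hU' hV' htr
    (mul_add_mul_eq_zero_of_posDef_add hX hS hXS hPD hU' hV' hUV)
  have hVX : V * X = 0 := by
    simpa [(isHermitian_iff_isSymm.1 hX.1).eq, hV.eq] using congr($hXVᵀ)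
  have hy : y = 0 := (primalNondeg_iff hA).1 hP y <| by
    rw [eq_neg_of_add_eq_zero_left hyV, neg_mul, hVX, neg_zero]
  refine ⟨(dualNondeg_iff hA).1 hD U hU hAU hSU, hy, ?_⟩
  simpa [hy] using hyV

theorem jNonsingular_iff (hA : ∀ i, (A i).IsSymm) (hX : X.PosSemidef) (hS : S.PosSemidef)
    (hXS : X * S = 0) :
    JNonsingular A X S ↔ (X + S).PosDef ∧ PrimalNondeg A X ∧ DualNondeg A S :=
  ⟨fun hJ => ⟨posDef_add_of_jNonsingular hA hX hS hJ,
      primalNondeg_of_jNonsingular hA (isHermitian_iff_isSymm.1 hX.1) hJ,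
      dualNondeg_of_jNonsingular hA (isHermitian_iff_isSymm.1 hS.1) hJ⟩,
    fun ⟨hPD, hP, hD⟩ => jNonsingular_of_nondeg hA hX hS hXS hPD hP hD⟩

end JacobianNonsingular

theorem stmt9_general {n m : ℕ} {C Cbar : Matrix (Fin n) (Fin n) ℝ}
    {A : Fin m → Matrix (Fin n) (Fin n) ℝ} {b : Fin m → ℝ} (hA : ∀ i, (A i).IsSymm)
    {X₀ : Matrix (Fin n) (Fin n) ℝ} (hX₀ : PrimalFeasible A b X₀) (hX₀pd : X₀.PosDef)
    {ε : ℝ} {X S : Matrix (Fin n) (Fin n) ℝ} {y : Fin m → ℝ}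
    (hX : X ∈ PrimalOpt C Cbar A b ε) (hS : (y, S) ∈ DualOpt C Cbar A b ε) :
    JNonsingular A X S ↔ (X + S).PosDef ∧ PrimalNondeg A X ∧ DualNondeg A S :=
  jNonsingular_iff hA hX.1.2.2 hS.1.2.2
    (mul_eq_zero_of_mem_primalOpt_of_mem_dualOpt hA hX₀ hX₀pd hX hS)

/-- the Jacobian at a maximally complementary solution is nonsingular iff the
solution is strictly complementary, primal nondegenerate and dual nondegenerate. -/
theorem stmt9 {n m : ℕ} (C Cbar : Matrix (Fin n) (Fin n) ℝ)
    (A : Fin m → Matrix (Fin n) (Fin n) ℝ) (b : Fin m → ℝ)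
    (hSA : StandingAssumptions C Cbar A b)
    (εbar : ℝ) (hεbar : εbar ∈ interior (Eset C Cbar A b))
    (Xs Ss : Matrix (Fin n) (Fin n) ℝ) (ys : Fin m → ℝ)
    (hmc : MaxComp C Cbar A b εbar Xs ys Ss) :
    JNonsingular A Xs Ss ↔
      (Xs + Ss).PosDef ∧ PrimalNondeg A Xs ∧ DualNondeg A Ss := by
  obtain ⟨-, -, hA, -, X₀, -, -, hX₀, hX₀pd, -⟩ := hSA
  exact stmt9_general hA hX₀ hX₀pd (intrinsicInterior_subset hmc.1) (intrinsicInterior_subset hmc.2)
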